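/- For a connected graph G on n vertices, E_R(G) ≤ α(G) + sqrt( (n−1)(S(G) − α(G)²) ), where α(G) = sqrt( (Σ T_i²)/(Σ R_i²) ) and S(G) = Σ_{i,j} r_ij². Equality holds if and only if G is a complete graph. -/

import Mathlib

open Matrix BigOperators Finset

noncomputable def allOnes (V : Type*) : Matrix V V ℝ := Matrix.of fun _ _ => 1

/-- The resistance distance matrix of a connected graph, via the matrix
`X = (L + (1/n)J)⁻¹`: `r_ij = X_ii + X_jj - 2X_ij`. -/
noncomputable def resistMatrix {V : Type*} [Fintype V] [DecidableEq V]
    (G : SimpleGraph V) [DecidableRel G.Adj] : Matrix V V ℝ :=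
  Matrix.of fun i j =>
    (G.lapMatrix ℝ + (Fintype.card V : ℝ)⁻¹ • allOnes V)⁻¹ i i +
    (G.lapMatrix ℝ + (Fintype.card V : ℝ)⁻¹ • allOnes V)⁻¹ j j -
    2 * (G.lapMatrix ℝ + (Fintype.card V : ℝ)⁻¹ • allOnes V)⁻¹ i j

/-- `W` is the Moore-Penrose inverse of `L`. -/
def IsMoorePenrose {V : Type*} [Fintype V] [DecidableEq V] (L W : Matrix V V ℝ) : Prop :=
  L * W * L = L ∧ W * L * W = W ∧ (L * W)ᵀ = L * W ∧ (W * L)ᵀ = W * L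

/-- Resistance degree `R_i`. -/
noncomputable def rdeg {V : Type*} [Fintype V] [DecidableEq V]
    (G : SimpleGraph V) [DecidableRel G.Adj] (i : V) : ℝ :=
  ∑ j, resistMatrix G i j

/-- Second resistance degree `T_i`. -/
noncomputable def rdeg2 {V : Type*} [Fintype V] [DecidableEq V]
    (G : SimpleGraph V) [DecidableRel G.Adj] (i : V) : ℝ :=
  ∑ j, resistMatrix G i j * rdeg G j

/-!
This is a Koolen–Moulton argument. Let `ρ` be the largest eigenvalue of the resistance distance
matrix `R` and put `f x = x + √((n - 1) (S - x²))`. Since `R` has trace zero, `ρ` is also the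
largest absolute value of an eigenvalue, and Cauchy–Schwarz on the other eigenvalues gives
`E ≤ f ρ`. The function `f` decreases for `x ≥ √(S / n)`, and `√(S / n) ≤ α ≤ ρ`, so
`f ρ ≤ f α`.

If equality holds, all eigenvalues but `ρ` have the same absolute value `c`. As `R` is negative
definite on the vectors with sum zero, they are all equal to `-c`. Hence `R + c I` has rank at most
one, and with the zero diagonal this makes `R` constant off the diagonal, which forces `G` to be
complete. Conversely, `2 α ≤ 2 ρ ≤ E` because the trace is zero, and `f α = 2 α` for a complete
graph.
-/

section KoolenMoulton

/-- The function `x ↦ x + √(m (S - x²))` of the Koolen–Moulton argument. For a real symmetric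
matrix of order `m + 1` whose squared entries sum to `S`, it bounds the sum of the absolute values
of the eigenvalues in terms of the absolute value `x` of one of them. -/
noncomputable def koolenMoulton (m S x : ℝ) : ℝ :=
  x + √(m * (S - x ^ 2))

lemma koolenMoulton_le_koolenMoulton {m S a b : ℝ} (hm : 0 ≤ m) (ha : 0 ≤ a) (hab : a ≤ b)
    (hSa : S ≤ (m + 1) * a ^ 2) (hbS : b ^ 2 ≤ S) :
    koolenMoulton m S b ≤ koolenMoulton m S a := by
  have hsq : a ^ 2 ≤ b ^ 2 := pow_le_pow_left₀ ha hab 2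
  set u := √(m * (S - a ^ 2))
  set v := √(m * (S - b ^ 2))
  have hu_nonneg : 0 ≤ u := Real.sqrt_nonneg _
  have hv_nonneg : 0 ≤ v := Real.sqrt_nonneg _
  have hu_sq : u ^ 2 = m * (S - a ^ 2) :=
    Real.sq_sqrt (mul_nonneg hm (sub_nonneg.mpr (hsq.trans hbS)))
  have hv_sq : v ^ 2 = m * (S - b ^ 2) := Real.sq_sqrt (mul_nonneg hm (sub_nonneg.mpr hbS))
  have hu_le : u ≤ m * a := by
    refine Real.sqrt_le_iff.mpr ⟨by positivity, ?_⟩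
    calc m * (S - a ^ 2) ≤ m * (m * a ^ 2) := by gcongr; linarith
      _ = (m * a) ^ 2 := by ring
  have hvu : v ≤ u := Real.sqrt_le_sqrt (by gcongr)
  suffices b - a ≤ u - v by
    rw [koolenMoulton, koolenMoulton]
    linarith
  have hmul : (b - a) * (u + v) ≤ (u - v) * (u + v) :=
    calc (b - a) * (u + v) ≤ (b - a) * (m * (a + b)) := by
          have huv_le : u + v ≤ m * (a + b) := by
            have hmab : m * a ≤ m * b := by gcongr
            linarith
          exact mul_le_mul_of_nonneg_left huv_le (sub_nonneg.mpr hab)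
      _ = (u - v) * (u + v) := by linear_combination hv_sq - hu_sq
  rcases (add_nonneg hu_nonneg hv_nonneg).eq_or_lt with hzero | hpos
  · have hu_zero : u = 0 := by linarith
    have hS : S ≤ a ^ 2 := by
      rw [hu_zero] at hu_sq
      nlinarith
    have hba : b ≤ a := le_of_sq_le_sq (hbS.trans hS) ha
    linarith
  · exact le_of_mul_le_mul_right hmul hpos

lemma sum_le_sqrt_card_mul_sum_sq {ι : Type*} (s : Finset ι) (f : ι → ℝ) :
    ∑ i ∈ s, f i ≤ √(#s * ∑ i ∈ s, f i ^ 2) :=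
  Real.le_sqrt_of_sq_le sq_sum_le_card_mul_sum_sq

lemma eq_sum_div_card_of_sum_eq_sqrt {ι : Type*} {s : Finset ι} {f : ι → ℝ}
    (h : ∑ i ∈ s, f i = √(#s * ∑ i ∈ s, f i ^ 2)) {i : ι} (hi : i ∈ s) :
    f i = (∑ j ∈ s, f j) / #s := by
  have hcard : (#s : ℝ) ≠ 0 := Nat.cast_ne_zero.mpr (card_ne_zero_of_mem hi)
  have hsq : (∑ j ∈ s, f j) ^ 2 = #s * ∑ j ∈ s, f j ^ 2 := by
    rw [h, Real.sq_sqrt (by positivity)]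
  have hvar : ∑ j ∈ s, (#s * f j - ∑ k ∈ s, f k) ^ 2 = 0 := by
    simp only [sub_sq, sum_add_distrib, sum_sub_distrib, mul_pow, ← mul_sum, ← sum_mul, sum_const,
      nsmul_eq_mul]
    linear_combination -(#s : ℝ) * hsq
  have hzero := (sum_eq_zero_iff_of_nonneg fun _ _ => sq_nonneg _).mp hvar i hi
  rw [eq_div_iff hcard, mul_comm]
  exact sub_eq_zero.mp (pow_eq_zero_iff two_ne_zero |>.mp hzero)

end KoolenMoulton

section RowSums

variable {V : Type*} [Fintype V] {A : Matrix V V ℝ}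

/-- The quotient `‖A (A 1)‖ / ‖A 1‖` for the all-ones vector `1`. For the resistance distance
matrix of a graph this is `α(G) = √(∑ T_i² / ∑ R_i²)`. It is `0` if `A 1 = 0`. -/
noncomputable def onesGrowth (A : Matrix V V ℝ) : ℝ :=
  √((∑ i, (A *ᵥ (A *ᵥ 1)) i ^ 2) / ∑ i, (A *ᵥ 1) i ^ 2)

lemma onesGrowth_nonneg (A : Matrix V V ℝ) : 0 ≤ onesGrowth A :=
  Real.sqrt_nonneg _

lemma onesGrowth_sq (A : Matrix V V ℝ) :
    onesGrowth A ^ 2 = (∑ i, (A *ᵥ (A *ᵥ 1)) i ^ 2) / ∑ i, (A *ᵥ 1) i ^ 2 :=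
  Real.sq_sqrt (by positivity)

lemma onesGrowth_eq_of_mulVec_one [Nonempty V] {r : ℝ} (hr : 0 ≤ r) (h : A *ᵥ 1 = r • 1) :
    onesGrowth A = r := by
  rw [← sq_eq_sq₀ (onesGrowth_nonneg A) hr, onesGrowth_sq, h, mulVec_smul, h]
  rcases hr.eq_or_lt with rfl | hpos
  · simp
  · simp only [Pi.smul_apply, Pi.one_apply, smul_eq_mul, mul_one, sum_const, card_univ,
      nsmul_eq_mul]
    field_simp

lemma sum_sq_le_card_mul_onesGrowth_sq (hA : A.IsHermitian) (hnonneg : ∀ i j, 0 ≤ A i j) :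
    ∑ i, ∑ j, A i j ^ 2 ≤ Fintype.card V * onesGrowth A ^ 2 := by
  rw [onesGrowth_sq]
  set P := ∑ i, (A *ᵥ (A *ᵥ 1)) i ^ 2
  set Q := ∑ i, (A *ᵥ 1) i ^ 2 with hQ
  have hSQ : ∑ i, ∑ j, A i j ^ 2 ≤ Q := by
    refine sum_le_sum fun i _ => ?_
    rw [mulVec, dotProduct_one]
    exact sum_sq_le_sq_sum_of_nonneg fun j _ => hnonneg i j
  have hQ_eq : Q = ∑ i, (A *ᵥ (A *ᵥ 1)) i := by
    have hsymm : Aᵀ = A := by simpa using hA.eq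
    calc Q = A *ᵥ 1 ⬝ᵥ A *ᵥ 1 := by simp only [hQ, dotProduct, sq]
      _ = 1 ⬝ᵥ A *ᵥ (A *ᵥ 1) := by rw [dotProduct_mulVec 1, ← mulVec_transpose, hsymm]
      _ = ∑ i, (A *ᵥ (A *ᵥ 1)) i := one_dotProduct _
  have hQP : Q ^ 2 ≤ Fintype.card V * P := by
    rw [hQ_eq]
    exact sq_sum_le_card_mul_sum_sq
  rcases (by positivity : 0 ≤ Q).eq_or_lt with hQ_zero | hQ_pos
  · simpa [← hQ_zero] using hSQ
  · rw [← mul_div_assoc]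
    exact hSQ.trans ((le_div_iff₀ hQ_pos).mpr (by rwa [← sq]))

lemma koolenMoulton_onesGrowth_of_apply_eq [Nonempty V] {c : ℝ} (hc : 0 ≤ c)
    (hdiag : ∀ i, A i i = 0) (hoff : ∀ i j, i ≠ j → A i j = c) :
    koolenMoulton (Fintype.card V - 1) (∑ i, ∑ j, A i j ^ 2) (onesGrowth A) =
      2 * onesGrowth A := by
  classical
  set m : ℝ := Fintype.card V - 1 with hm
  have hm_nonneg : 0 ≤ m := by simpa [hm] using Nat.one_le_iff_ne_zero.mpr Fintype.card_ne_zero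
  have hcard (i : V) : (#(univ.erase i) : ℝ) = m := by
    rw [cast_card_erase_of_mem (mem_univ i), card_univ]
  have hrow (i : V) : ∑ j, A i j = m * c := by
    rw [← add_sum_erase _ _ (mem_univ i), hdiag, zero_add,
      sum_congr rfl fun j hj => hoff i j (ne_of_mem_erase hj).symm, sum_const, nsmul_eq_mul, hcard]
  have hrow_sq (i : V) : ∑ j, A i j ^ 2 = m * c ^ 2 := by
    rw [← add_sum_erase _ _ (mem_univ i), hdiag, zero_pow two_ne_zero, zero_add,
      sum_congr rfl fun j hj => by rw [hoff i j (ne_of_mem_erase hj).symm], sum_const,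
      nsmul_eq_mul, hcard]
  have hgrowth : onesGrowth A = m * c :=
    onesGrowth_eq_of_mulVec_one (by positivity) (by ext i; simp [mulVec, dotProduct_one, hrow])
  have hS : ∑ i, ∑ j, A i j ^ 2 = (m + 1) * (m * c ^ 2) := by simp [hrow_sq, hm]
  have hroot : m * ((m + 1) * (m * c ^ 2) - (m * c) ^ 2) = (m * c) ^ 2 := by ring
  rw [koolenMoulton, hS, hgrowth, hroot, Real.sqrt_sq (by positivity), two_mul]

end RowSums

section Spectral

variable {V : Type*} [Fintype V] [DecidableEq V] {A : Matrix V V ℝ}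

lemma sum_eigenvectorBasis_dotProduct_mul (hA : A.IsHermitian) (x y : V → ℝ) :
    ∑ k, (⇑(hA.eigenvectorBasis k) ⬝ᵥ x) * (⇑(hA.eigenvectorBasis k) ⬝ᵥ y) = x ⬝ᵥ y := by
  simpa [EuclideanSpace.inner_eq_star_dotProduct, dotProduct_comm] using
    hA.eigenvectorBasis.sum_inner_mul_inner (WithLp.toLp 2 x) (WithLp.toLp 2 y)

lemma eigenvectorBasis_dotProduct_eigenvectorBasis (hA : A.IsHermitian) (k l : V) :
    ⇑(hA.eigenvectorBasis k) ⬝ᵥ ⇑(hA.eigenvectorBasis l) = if k = l then 1 else 0 := by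
  rw [← orthonormal_iff_ite.mp hA.eigenvectorBasis.orthonormal k l,
    EuclideanSpace.inner_eq_star_dotProduct, star_trivial, dotProduct_comm]

lemma eigenvectorBasis_dotProduct_mulVec (hA : A.IsHermitian) (k : V) (x : V → ℝ) :
    ⇑(hA.eigenvectorBasis k) ⬝ᵥ A *ᵥ x =
      hA.eigenvalues k * (⇑(hA.eigenvectorBasis k) ⬝ᵥ x) := by
  have hsymm : Aᵀ = A := by simpa using hA.eq
  rw [dotProduct_mulVec, ← mulVec_transpose, hsymm, hA.mulVec_eigenvectorBasis, smul_dotProduct,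
    smul_eq_mul]

lemma apply_eq_sum_eigenvalues (hA : A.IsHermitian) (i j : V) :
    A i j = ∑ k, hA.eigenvalues k * hA.eigenvectorBasis k i * hA.eigenvectorBasis k j := by
  calc A i j = Pi.single i 1 ⬝ᵥ A *ᵥ Pi.single j 1 := by simp
    _ = ∑ k, (⇑(hA.eigenvectorBasis k) ⬝ᵥ Pi.single i 1) *
        (⇑(hA.eigenvectorBasis k) ⬝ᵥ A *ᵥ Pi.single j 1) :=
      (sum_eigenvectorBasis_dotProduct_mul hA _ _).symm
    _ = ∑ k, hA.eigenvalues k * hA.eigenvectorBasis k i * hA.eigenvectorBasis k j :=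
      sum_congr rfl fun k _ => by
        rw [eigenvectorBasis_dotProduct_mulVec, dotProduct_single_one, dotProduct_single_one]
        ring

lemma mulVec_dotProduct_mulVec_eq_sum_eigenvalues (hA : A.IsHermitian) (x : V → ℝ) :
    A *ᵥ x ⬝ᵥ A *ᵥ x = ∑ k, hA.eigenvalues k ^ 2 * (⇑(hA.eigenvectorBasis k) ⬝ᵥ x) ^ 2 := by
  rw [← sum_eigenvectorBasis_dotProduct_mul hA]
  exact sum_congr rfl fun k _ => by rw [eigenvectorBasis_dotProduct_mulVec]; ring

lemma sum_sq_mulVec_le_sq_mul (hA : A.IsHermitian) {r : ℝ} (hr : ∀ k, |hA.eigenvalues k| ≤ r)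
    (x : V → ℝ) : ∑ i, (A *ᵥ x) i ^ 2 ≤ r ^ 2 * ∑ i, x i ^ 2 := by
  calc ∑ i, (A *ᵥ x) i ^ 2 = A *ᵥ x ⬝ᵥ A *ᵥ x := by simp only [dotProduct, sq]
    _ = ∑ k, hA.eigenvalues k ^ 2 * (⇑(hA.eigenvectorBasis k) ⬝ᵥ x) ^ 2 :=
      mulVec_dotProduct_mulVec_eq_sum_eigenvalues hA x
    _ ≤ ∑ k, r ^ 2 * (⇑(hA.eigenvectorBasis k) ⬝ᵥ x) ^ 2 :=
      sum_le_sum fun k _ => mul_le_mul_of_nonneg_right (sq_le_sq.mpr ((hr k).trans (le_abs_self r)))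
        (sq_nonneg _)
    _ = r ^ 2 * (x ⬝ᵥ x) := by
      rw [← mul_sum, ← sum_eigenvectorBasis_dotProduct_mul hA]
      simp only [sq]
    _ = r ^ 2 * ∑ i, x i ^ 2 := by simp only [dotProduct, sq]

lemma sum_sq_eigenvalues (hA : A.IsHermitian) :
    ∑ k, hA.eigenvalues k ^ 2 = ∑ i, ∑ j, A i j ^ 2 := by
  have hcol (j : V) : ∑ i, A i j ^ 2 = ∑ k, hA.eigenvalues k ^ 2 * hA.eigenvectorBasis k j ^ 2 := by
    have h := mulVec_dotProduct_mulVec_eq_sum_eigenvalues hA (Pi.single j 1)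
    simp only [dotProduct_single_one, mulVec_single_one] at h
    simpa [dotProduct, ← sq] using h
  have hunit (k : V) : ∑ j, hA.eigenvectorBasis k j ^ 2 = 1 := by
    simpa [dotProduct, sq] using eigenvectorBasis_dotProduct_eigenvectorBasis hA k k
  rw [sum_comm]
  simp only [hcol]
  rw [sum_comm]
  simp only [← mul_sum, hunit, mul_one]

lemma two_mul_abs_eigenvalues_le_sum_abs (hA : A.IsHermitian) (htr : A.trace = 0) (k : V) :
    2 * |hA.eigenvalues k| ≤ ∑ l, |hA.eigenvalues l| := by
  have hsum : hA.eigenvalues k + ∑ l ∈ univ.erase k, hA.eigenvalues l = 0 := by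
    rw [add_sum_erase _ _ (mem_univ k)]
    simpa [htr] using hA.trace_eq_sum_eigenvalues.symm
  calc 2 * |hA.eigenvalues k|
      = |hA.eigenvalues k| + |∑ l ∈ univ.erase k, hA.eigenvalues l| := by
        rw [← neg_eq_of_add_eq_zero_right hsum, abs_neg, two_mul]
    _ ≤ |hA.eigenvalues k| + ∑ l ∈ univ.erase k, |hA.eigenvalues l| := by
        gcongr
        exact abs_sum_le_sum_abs _ _
    _ = ∑ l, |hA.eigenvalues l| := add_sum_erase _ (fun l => |hA.eigenvalues l|) (mem_univ k)

-- Any two eigenvectors combine to a nonzero vector orthogonal to `w`.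
lemma eigenvalues_neg_of_ne (hA : A.IsHermitian) {w : V → ℝ}
    (hneg : ∀ x : V → ℝ, x ≠ 0 → w ⬝ᵥ x = 0 → x ⬝ᵥ A *ᵥ x < 0) {k l : V}
    (hk : 0 ≤ hA.eigenvalues k) (hlk : l ≠ k) : hA.eigenvalues l < 0 := by
  by_contra! hl
  set u : V → ℝ := ⇑(hA.eigenvectorBasis k) with hu
  set v : V → ℝ := ⇑(hA.eigenvectorBasis l) with hv
  have huu : u ⬝ᵥ u = 1 := by simp [hu, eigenvectorBasis_dotProduct_eigenvectorBasis]
  have hvv : v ⬝ᵥ v = 1 := by simp [hv, eigenvectorBasis_dotProduct_eigenvectorBasis]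
  have huv : u ⬝ᵥ v = 0 := by simp [hu, hv, eigenvectorBasis_dotProduct_eigenvectorBasis, hlk.symm]
  have hAu : A *ᵥ u = hA.eigenvalues k • u := hA.mulVec_eigenvectorBasis k
  have hAv : A *ᵥ v = hA.eigenvalues l • v := hA.mulVec_eigenvectorBasis l
  obtain ⟨a, b, hab, hw⟩ : ∃ a b : ℝ, a ^ 2 + b ^ 2 ≠ 0 ∧ a * (w ⬝ᵥ u) + b * (w ⬝ᵥ v) = 0 := by
    by_cases hwu : w ⬝ᵥ u = 0
    · exact ⟨1, 0, by norm_num, by simp [hwu]⟩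
    · exact ⟨-(w ⬝ᵥ v), w ⬝ᵥ u, by positivity, by ring⟩
  set x := a • u + b • v with hx
  have hxx : x ⬝ᵥ x = a ^ 2 + b ^ 2 := by
    simp only [hx, dotProduct_add, add_dotProduct, dotProduct_smul, smul_dotProduct, smul_eq_mul,
      dotProduct_comm v u, huu, hvv, huv]
    ring
  have hwx : w ⬝ᵥ x = 0 := by
    rwa [hx, dotProduct_add, dotProduct_smul, dotProduct_smul]
  have hform : x ⬝ᵥ A *ᵥ x = a ^ 2 * hA.eigenvalues k + b ^ 2 * hA.eigenvalues l := by
    simp only [hx, mulVec_add, mulVec_smul, hAu, hAv, dotProduct_add, add_dotProduct,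
      dotProduct_smul, smul_dotProduct, smul_eq_mul, dotProduct_comm v u, huu, hvv, huv]
    ring
  have hx0 : x ≠ 0 := fun h => hab (by rw [← hxx, h, dotProduct_zero])
  have hform_nonneg : 0 ≤ x ⬝ᵥ A *ᵥ x := hform ▸ by positivity
  exact (hneg x hx0 hwx).not_ge hform_nonneg

lemma exists_dominant_eigenvalue [Nonempty V] (hA : A.IsHermitian) (htr : A.trace = 0) {w : V → ℝ}
    (hneg : ∀ x : V → ℝ, x ≠ 0 → w ⬝ᵥ x = 0 → x ⬝ᵥ A *ᵥ x < 0) :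
    ∃ k, (∀ l, |hA.eigenvalues l| ≤ hA.eigenvalues k) ∧ ∀ l, l ≠ k → hA.eigenvalues l < 0 := by
  have hsum : ∑ l, hA.eigenvalues l = 0 := by simpa [htr] using hA.trace_eq_sum_eigenvalues.symm
  obtain ⟨k, -, hk⟩ : ∃ k ∈ univ, 0 ≤ hA.eigenvalues k :=
    exists_le_of_sum_le univ_nonempty (by simp [hsum])
  have hlt : ∀ l, l ≠ k → hA.eigenvalues l < 0 := fun _ => eigenvalues_neg_of_ne hA hneg hk
  refine ⟨k, fun l => ?_, hlt⟩
  obtain rfl | hl := eq_or_ne l k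
  · exact (abs_of_nonneg hk).le
  have hrest : ∑ j ∈ univ.erase k, -hA.eigenvalues j = hA.eigenvalues k := by
    rw [sum_neg_distrib, neg_eq_iff_add_eq_zero, sum_erase_add _ _ (mem_univ k), hsum]
  rw [abs_of_neg (hlt l hl), ← hrest]
  exact single_le_sum (f := fun j => -hA.eigenvalues j)
    (fun j hj => neg_nonneg.mpr (hlt j (ne_of_mem_erase hj)).le) (mem_erase.mpr ⟨hl, mem_univ l⟩)

-- If all eigenvalues but one equal `μ`, then `A - μ • 1` has rank at most one.
lemma apply_eq_add_mul_of_eigenvalues_eq (hA : A.IsHermitian) {k : V} {μ : ℝ}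
    (h : ∀ l, l ≠ k → hA.eigenvalues l = μ) (i j : V) :
    A i j = (if i = j then μ else 0) +
      (hA.eigenvalues k - μ) * hA.eigenvectorBasis k i * hA.eigenvectorBasis k j := by
  have hone : ∑ l, hA.eigenvectorBasis l i * hA.eigenvectorBasis l j = if i = j then 1 else 0 := by
    simpa [Pi.single_apply, eq_comm] using
      sum_eigenvectorBasis_dotProduct_mul hA (Pi.single i 1) (Pi.single j 1)
  have hrest : ∑ l, (hA.eigenvalues l - μ) * hA.eigenvectorBasis l i * hA.eigenvectorBasis l j =
      (hA.eigenvalues k - μ) * hA.eigenvectorBasis k i * hA.eigenvectorBasis k j :=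
    Fintype.sum_eq_single k fun l hl => by simp [h l hl]
  rw [← hrest, apply_eq_sum_eigenvalues hA, ← mul_one μ, ← mul_zero μ, ← mul_ite, ← hone, mul_sum,
    ← sum_add_distrib]
  exact sum_congr rfl fun l _ => by ring

lemma apply_eq_abs_of_eigenvalues_eq (hA : A.IsHermitian) (hdiag : ∀ i, A i i = 0)
    (hnonneg : ∀ i j, 0 ≤ A i j) {k : V} {μ : ℝ} (h : ∀ l, l ≠ k → hA.eigenvalues l = μ) {i j : V}
    (hij : i ≠ j) : A i j = |μ| := by
  have hi := apply_eq_add_mul_of_eigenvalues_eq hA h i i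
  have hj := apply_eq_add_mul_of_eigenvalues_eq hA h j j
  have hAij := apply_eq_add_mul_of_eigenvalues_eq hA h i j
  rw [hdiag, if_pos rfl] at hi hj
  rw [if_neg hij, zero_add] at hAij
  rw [← abs_of_nonneg (hnonneg i j), ← sq_eq_sq_iff_abs_eq_abs, hAij]
  linear_combination μ * hi -
    (hA.eigenvalues k - μ) * hA.eigenvectorBasis k i * hA.eigenvectorBasis k i * hj

lemma koolenMoulton_abs_eigenvalues (hA : A.IsHermitian) (k : V) :
    koolenMoulton (Fintype.card V - 1) (∑ i, ∑ j, A i j ^ 2) |hA.eigenvalues k| =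
      |hA.eigenvalues k| +
        √(#(univ.erase k) * ∑ l ∈ univ.erase k, |hA.eigenvalues l| ^ 2) := by
  simp only [koolenMoulton, sq_abs, cast_card_erase_of_mem (mem_univ k), card_univ,
    sum_erase_eq_sub (mem_univ k), sum_sq_eigenvalues hA]

lemma sum_abs_eigenvalues_le_koolenMoulton (hA : A.IsHermitian) (k : V) :
    ∑ l, |hA.eigenvalues l| ≤
      koolenMoulton (Fintype.card V - 1) (∑ i, ∑ j, A i j ^ 2) |hA.eigenvalues k| := by
  rw [koolenMoulton_abs_eigenvalues, ← add_sum_erase _ _ (mem_univ k)]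
  gcongr
  exact sum_le_sqrt_card_mul_sum_sq _ _

lemma exists_abs_eigenvalues_eq_of_sum_eq_koolenMoulton (hA : A.IsHermitian) {k : V}
    (h : ∑ l, |hA.eigenvalues l| =
      koolenMoulton (Fintype.card V - 1) (∑ i, ∑ j, A i j ^ 2) |hA.eigenvalues k|) :
    ∃ c, ∀ l, l ≠ k → |hA.eigenvalues l| = c := by
  rw [koolenMoulton_abs_eigenvalues, ← add_sum_erase _ _ (mem_univ k)] at h
  exact ⟨_, fun l hl =>
    eq_sum_div_card_of_sum_eq_sqrt (add_left_cancel h) (mem_erase.mpr ⟨hl, mem_univ l⟩)⟩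

lemma onesGrowth_le_abs_eigenvalues (hA : A.IsHermitian) {k : V}
    (hk : ∀ l, |hA.eigenvalues l| ≤ |hA.eigenvalues k|) : onesGrowth A ≤ |hA.eigenvalues k| :=
  Real.sqrt_le_iff.mpr ⟨abs_nonneg _, div_le_of_le_mul₀ (by positivity) (sq_nonneg _)
    (sum_sq_mulVec_le_sq_mul hA hk _)⟩

lemma koolenMoulton_abs_eigenvalues_le_onesGrowth (hA : A.IsHermitian)
    (hnonneg : ∀ i j, 0 ≤ A i j) {k : V} (hk : ∀ l, |hA.eigenvalues l| ≤ |hA.eigenvalues k|) :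
    koolenMoulton (Fintype.card V - 1) (∑ i, ∑ j, A i j ^ 2) |hA.eigenvalues k| ≤
      koolenMoulton (Fintype.card V - 1) (∑ i, ∑ j, A i j ^ 2) (onesGrowth A) := by
  have hcard : (1 : ℝ) ≤ Fintype.card V := Nat.one_le_cast.mpr (Fintype.card_pos_iff.mpr ⟨k⟩)
  refine koolenMoulton_le_koolenMoulton (sub_nonneg.mpr hcard) (onesGrowth_nonneg A)
    (onesGrowth_le_abs_eigenvalues hA hk) ?_ ?_
  · rw [sub_add_cancel]
    exact sum_sq_le_card_mul_onesGrowth_sq hA hnonneg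
  · rw [sq_abs, ← sum_sq_eigenvalues hA]
    exact single_le_sum (f := fun l => hA.eigenvalues l ^ 2) (fun l _ => sq_nonneg _) (mem_univ k)

end Spectral

section ResistanceMatrix

variable {V : Type*} [Fintype V] [DecidableEq V] {G : SimpleGraph V} [DecidableRel G.Adj]

/-- The matrix `L + J / n`, where `L` is the Laplacian of `G` and `J` the all-ones matrix. For a
connected graph its inverse determines the resistance distances. -/
noncomputable def regLaplacian (G : SimpleGraph V) [DecidableRel G.Adj] : Matrix V V ℝ :=
  G.lapMatrix ℝ + (Fintype.card V : ℝ)⁻¹ • allOnes V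

lemma regLaplacian_isHermitian : (regLaplacian G).IsHermitian :=
  (G.isHermitian_lapMatrix ℝ).add (by ext i j; simp [allOnes])

lemma regLaplacian_apply_of_ne {i j : V} (hij : i ≠ j) :
    regLaplacian G i j = (Fintype.card V : ℝ)⁻¹ - if G.Adj i j then 1 else 0 := by
  simp [regLaplacian, SimpleGraph.lapMatrix, SimpleGraph.degMatrix, allOnes, hij, sub_eq_neg_add]

lemma regLaplacian_mulVec (x : V → ℝ) :
    regLaplacian G *ᵥ x =
      G.lapMatrix ℝ *ᵥ x + ((Fintype.card V : ℝ)⁻¹ * (1 ⬝ᵥ x)) • (1 : V → ℝ) := by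
  rw [regLaplacian, add_mulVec, smul_mulVec, mul_smul]
  congr 2
  ext i
  simp [allOnes, mulVec, dotProduct]

lemma regLaplacian_mulVec_one [Nonempty V] : regLaplacian G *ᵥ 1 = 1 := by
  have hL : G.lapMatrix ℝ *ᵥ 1 = 0 := SimpleGraph.lapMatrix_mulVec_const_eq_zero G
  rw [regLaplacian_mulVec, hL, one_dotProduct_one, inv_mul_cancel₀ (by simp), one_smul, zero_add]

lemma regLaplacian_posDef (hG : G.Connected) : (regLaplacian G).PosDef := by
  have := hG.nonempty
  refine .of_dotProduct_mulVec_pos regLaplacian_isHermitian fun x hx => ?_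
  have hform : star x ⬝ᵥ (regLaplacian G *ᵥ x) =
      x ⬝ᵥ (G.lapMatrix ℝ *ᵥ x) + (Fintype.card V : ℝ)⁻¹ * (1 ⬝ᵥ x) ^ 2 := by
    rw [star_trivial, regLaplacian_mulVec, dotProduct_add, dotProduct_smul, dotProduct_comm x 1,
      smul_eq_mul, mul_assoc, sq]
  have hL : 0 ≤ x ⬝ᵥ (G.lapMatrix ℝ *ᵥ x) := by
    simpa using (SimpleGraph.posSemidef_lapMatrix ℝ G).dotProduct_mulVec_nonneg x
  have hJ : 0 ≤ (Fintype.card V : ℝ)⁻¹ * (1 ⬝ᵥ x) ^ 2 := by positivity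
  rw [hform]
  refine (add_nonneg hL hJ).lt_of_ne' fun hzero => hx ?_
  obtain ⟨hL_zero, hJ_zero⟩ := (add_eq_zero_iff_of_nonneg hL hJ).mp hzero
  have hconst : ∀ i j, x i = x j := by
    rw [← toLinearMap₂'_apply',
      SimpleGraph.lapMatrix_toLinearMap₂'_apply'_eq_zero_iff_forall_reachable] at hL_zero
    exact fun i j => hL_zero i j (hG.preconnected i j)
  ext i
  simpa [one_dotProduct, hconst _ i] using hJ_zero

lemma isUnit_det_regLaplacian (hG : G.Connected) : IsUnit (regLaplacian G).det :=
  (isUnit_iff_isUnit_det _).mp (regLaplacian_posDef hG).isUnit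

lemma regLaplacian_inv_mulVec_mulVec (hG : G.Connected) (x : V → ℝ) :
    (regLaplacian G)⁻¹ *ᵥ (regLaplacian G *ᵥ x) = x := by
  rw [mulVec_mulVec, nonsing_inv_mul _ (isUnit_det_regLaplacian hG), one_mulVec]

lemma regLaplacian_inv_mulVec_one (hG : G.Connected) : (regLaplacian G)⁻¹ *ᵥ 1 = 1 := by
  have := hG.nonempty
  simpa [regLaplacian_mulVec_one] using regLaplacian_inv_mulVec_mulVec hG 1

lemma resistMatrix_apply (i j : V) :
    resistMatrix G i j =
      (regLaplacian G)⁻¹ i i + (regLaplacian G)⁻¹ j j - 2 * (regLaplacian G)⁻¹ i j :=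
  rfl

lemma resistMatrix_diag (i : V) : resistMatrix G i i = 0 := by
  rw [resistMatrix_apply]
  ring

lemma resistMatrix_mulVec_one : resistMatrix G *ᵥ 1 = rdeg G := by
  ext i
  rw [rdeg, mulVec, dotProduct_one]

lemma resistMatrix_mulVec_rdeg : resistMatrix G *ᵥ rdeg G = rdeg2 G :=
  rfl

lemma resistMatrix_mulVec (x : V → ℝ) :
    resistMatrix G *ᵥ x = (1 ⬝ᵥ x) • (regLaplacian G)⁻¹.diag +
      ((regLaplacian G)⁻¹.diag ⬝ᵥ x) • 1 - (2 : ℝ) • ((regLaplacian G)⁻¹ *ᵥ x) := by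
  ext i
  simp only [mulVec, dotProduct, resistMatrix_apply, add_mul, sub_mul, sum_add_distrib,
    sum_sub_distrib, mul_assoc, ← mul_sum, Pi.add_apply, Pi.sub_apply, Pi.smul_apply,
    Pi.one_apply, diag_apply, smul_eq_mul, mul_one, one_mul]
  ring

lemma rdeg_eq_card_mul_add_trace (hG : G.Connected) (i : V) :
    rdeg G i = Fintype.card V * (regLaplacian G)⁻¹ i i + (regLaplacian G)⁻¹.trace - 2 := by
  rw [← resistMatrix_mulVec_one, resistMatrix_mulVec, regLaplacian_inv_mulVec_one hG,
    one_dotProduct_one, dotProduct_one]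
  simp [trace]

lemma dotProduct_resistMatrix_mulVec {x : V → ℝ} (hx : 1 ⬝ᵥ x = 0) :
    x ⬝ᵥ resistMatrix G *ᵥ x = -2 * (x ⬝ᵥ (regLaplacian G)⁻¹ *ᵥ x) := by
  rw [resistMatrix_mulVec, hx, zero_smul, zero_add, dotProduct_sub, dotProduct_smul,
    dotProduct_comm x 1, hx, dotProduct_smul]
  simp

lemma dotProduct_resistMatrix_mulVec_neg (hG : G.Connected) {x : V → ℝ} (hx : x ≠ 0)
    (hsum : 1 ⬝ᵥ x = 0) : x ⬝ᵥ resistMatrix G *ᵥ x < 0 := by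
  have hpos := (regLaplacian_posDef hG).inv.dotProduct_mulVec_pos hx
  rw [star_trivial] at hpos
  rw [dotProduct_resistMatrix_mulVec hsum]
  linarith

lemma resistMatrix_eq_dotProduct (i j : V) :
    resistMatrix G i j = (Pi.single i 1 - Pi.single j 1) ⬝ᵥ
      (regLaplacian G)⁻¹ *ᵥ (Pi.single i 1 - Pi.single j 1) := by
  have hsymm : (regLaplacian G)⁻¹ j i = (regLaplacian G)⁻¹ i j := by
    simpa using regLaplacian_isHermitian.inv.apply i j
  simp only [mulVec_sub, mulVec_single_one, sub_dotProduct, single_one_dotProduct, Pi.sub_apply,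
    col_apply, hsymm, resistMatrix_apply]
  ring

lemma resistMatrix_pos (hG : G.Connected) {i j : V} (hij : i ≠ j) : 0 < resistMatrix G i j := by
  have hne : Pi.single i 1 - Pi.single j 1 ≠ (0 : V → ℝ) := fun h => by
    simpa [hij] using congrFun h i
  rw [resistMatrix_eq_dotProduct]
  simpa using (regLaplacian_posDef hG).inv.dotProduct_mulVec_pos hne

lemma resistMatrix_nonneg (hG : G.Connected) (i j : V) : 0 ≤ resistMatrix G i j := by
  obtain rfl | hij := eq_or_ne i j
  · exact resistMatrix_diag i |>.ge
  · exact (resistMatrix_pos hG hij).le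

lemma lapMatrix_top_mulVec [DecidableRel (⊤ : SimpleGraph V).Adj] {x : V → ℝ} (hx : 1 ⬝ᵥ x = 0) :
    (⊤ : SimpleGraph V).lapMatrix ℝ *ᵥ x = (Fintype.card V : ℝ) • x := by
  ext i
  have hnbr : (⊤ : SimpleGraph V).neighborFinset i = univ.erase i := by
    ext j
    simp [eq_comm]
  have hdeg : ((⊤ : SimpleGraph V).degree i : ℝ) = Fintype.card V - 1 := by
    rw [← SimpleGraph.card_neighborFinset_eq_degree, hnbr, cast_card_erase_of_mem (mem_univ i),
      card_univ]
  have hsum : ∑ j ∈ (⊤ : SimpleGraph V).neighborFinset i, x j = -x i := by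
    rw [hnbr, sum_erase_eq_sub (mem_univ i), ← one_dotProduct, hx, zero_sub]
  rw [SimpleGraph.lapMatrix_mulVec_apply, hdeg, hsum, Pi.smul_apply, smul_eq_mul]
  ring

lemma resistMatrix_top [DecidableRel (⊤ : SimpleGraph V).Adj] {i j : V} (hij : i ≠ j) :
    resistMatrix (⊤ : SimpleGraph V) i j = 2 / Fintype.card V := by
  have : Nonempty V := ⟨i⟩
  set n : ℝ := (Fintype.card V : ℝ)
  have hn : n ≠ 0 := Nat.cast_ne_zero.mpr Fintype.card_ne_zero
  set x : V → ℝ := Pi.single i 1 - Pi.single j 1 with hx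
  have hsum : 1 ⬝ᵥ x = 0 := by simp [hx, dotProduct_sub]
  have hM : regLaplacian (⊤ : SimpleGraph V) *ᵥ x = n • x := by
    rw [regLaplacian_mulVec, hsum, mul_zero, zero_smul, add_zero, lapMatrix_top_mulVec hsum]
  have hX : (regLaplacian (⊤ : SimpleGraph V))⁻¹ *ᵥ x = n⁻¹ • x := by
    rw [eq_inv_smul_iff₀ hn, ← mulVec_smul, ← hM,
      regLaplacian_inv_mulVec_mulVec SimpleGraph.connected_top]
  have hxx : x ⬝ᵥ x = 2 := by
    simpa [hx, dotProduct_sub, hij, hij.symm] using one_add_one_eq_two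
  rw [resistMatrix_eq_dotProduct, ← hx, hX, dotProduct_smul, hxx, smul_eq_mul, inv_mul_eq_div]

lemma exists_mul_regLaplacian_apply_eq (hG : G.Connected) {c : ℝ}
    (h : ∀ i j, i ≠ j → resistMatrix G i j = c) :
    ∃ d, ∀ i j, i ≠ j → c * regLaplacian G i j = d := by
  have := hG.nonempty
  set X := (regLaplacian G)⁻¹ with hX
  have hrdeg (i : V) : rdeg G i = (Fintype.card V - 1) * c := by
    rw [rdeg, ← add_sum_erase _ _ (mem_univ i), resistMatrix_diag, zero_add,
      sum_congr rfl fun j hj => h i j (ne_of_mem_erase hj).symm, sum_const, nsmul_eq_mul,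
      cast_card_erase_of_mem (mem_univ i), card_univ]
  obtain ⟨d, hd⟩ : ∃ d, ∀ i, X i i = d := by
    obtain ⟨v⟩ := hG.nonempty
    refine ⟨X v v, fun i => ?_⟩
    have hiv : rdeg G i = rdeg G v := (hrdeg i).trans (hrdeg v).symm
    simpa [rdeg_eq_card_mul_add_trace hG] using hiv
  have hcol (j : V) : (2 : ℝ) • X *ᵥ Pi.single j 1 = (2 * d - c) • 1 + c • Pi.single j 1 := by
    ext i
    have hij := resistMatrix_apply (G := G) i j
    obtain rfl | hne := eq_or_ne i j
    · simp [hd]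
    · rw [h i j hne, ← hX, hd, hd] at hij
      have hX_ij : 2 * X i j = 2 * d - c := by linarith
      simpa [hne] using hX_ij
  refine ⟨c - 2 * d, fun i j hij => ?_⟩
  have hMX : (2 : ℝ) • Pi.single j 1 = (2 * d - c) • 1 + c • regLaplacian G *ᵥ Pi.single j 1 := by
    have hmul := congrArg (regLaplacian G *ᵥ ·) (hcol j)
    simpa only [mulVec_add, mulVec_smul, regLaplacian_mulVec_one, mulVec_mulVec, hX,
      mul_nonsing_inv _ (isUnit_det_regLaplacian hG), one_mulVec] using hmul
  have hMX_ij : 0 = 2 * d - c + c * regLaplacian G i j := by simpa [hij] using congrFun hMX i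
  linarith

lemma eq_top_of_resistMatrix_eq (hG : G.Connected) {c : ℝ}
    (h : ∀ i j, i ≠ j → resistMatrix G i j = c) : G = ⊤ := by
  obtain ⟨d, hd⟩ := exists_mul_regLaplacian_apply_eq hG h
  have hadj {i j k l : V} (hij : G.Adj i j) (hkl : k ≠ l) : G.Adj k l := by
    have hc : c ≠ 0 := h k l hkl ▸ (resistMatrix_pos hG hkl).ne'
    have heq := mul_left_cancel₀ hc ((hd i j hij.ne).trans (hd k l hkl).symm)
    rw [regLaplacian_apply_of_ne hij.ne, regLaplacian_apply_of_ne hkl, if_pos hij] at heq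
    by_contra hn
    simp [hn] at heq
  ext i j
  refine ⟨fun hij => hij.ne, fun hij => ?_⟩
  have : Nontrivial V := ⟨i, j, hij⟩
  obtain ⟨w, hw⟩ := hG.preconnected.exists_adj_of_nontrivial i
  exact hadj hw hij

end ResistanceMatrix

theorem resistance_energy_upper_bound_general {V : Type*} [Fintype V] [DecidableEq V]
    {G : SimpleGraph V} [DecidableRel G.Adj] (hG : G.Connected)
    (hR : (resistMatrix G).IsHermitian) :
    (∑ i, |hR.eigenvalues i|) ≤
      koolenMoulton (Fintype.card V - 1) (∑ i, ∑ j, resistMatrix G i j ^ 2)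
        (onesGrowth (resistMatrix G)) ∧
    ((∑ i, |hR.eigenvalues i|) =
      koolenMoulton (Fintype.card V - 1) (∑ i, ∑ j, resistMatrix G i j ^ 2)
        (onesGrowth (resistMatrix G)) ↔ G = ⊤) := by
  have := hG.nonempty
  have htr : (resistMatrix G).trace = 0 := sum_eq_zero fun i _ => resistMatrix_diag i
  obtain ⟨k, hk, hlt⟩ := exists_dominant_eigenvalue hR htr fun _ =>
    dotProduct_resistMatrix_mulVec_neg hG
  replace hk l : |hR.eigenvalues l| ≤ |hR.eigenvalues k| := (hk l).trans (le_abs_self _)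
  have hle := sum_abs_eigenvalues_le_koolenMoulton hR k
  have hanti := koolenMoulton_abs_eigenvalues_le_onesGrowth hR (resistMatrix_nonneg hG) hk
  refine ⟨hle.trans hanti, fun heq => ?_, fun htop => (hle.trans hanti).antisymm ?_⟩
  · obtain ⟨c, hc⟩ :=
      exists_abs_eigenvalues_eq_of_sum_eq_koolenMoulton hR (hle.antisymm (heq ▸ hanti))
    have hneg l (hl : l ≠ k) : hR.eigenvalues l = -c := by
      rw [← hc l hl, abs_of_neg (hlt l hl), neg_neg]
    exact eq_top_of_resistMatrix_eq hG fun i j =>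
      apply_eq_abs_of_eigenvalues_eq hR resistMatrix_diag (resistMatrix_nonneg hG) hneg
  · subst htop
    rw [koolenMoulton_onesGrowth_of_apply_eq (by positivity) resistMatrix_diag
      fun i j => resistMatrix_top]
    linarith [onesGrowth_le_abs_eigenvalues hR hk, two_mul_abs_eigenvalues_le_sum_abs hR htr k]

theorem resistance_energy_upper_bound
    (n : ℕ) (G : SimpleGraph (Fin n)) [DecidableRel G.Adj]
    (hG : G.Connected) (hR : (resistMatrix G).IsHermitian) :
    (∑ i, |hR.eigenvalues i|) ≤
      Real.sqrt ((∑ i, rdeg2 G i ^ 2) / (∑ i, rdeg G i ^ 2)) +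
        Real.sqrt (((n : ℝ) - 1) *
          ((∑ i, ∑ j, resistMatrix G i j ^ 2) -
            (∑ i, rdeg2 G i ^ 2) / (∑ i, rdeg G i ^ 2))) ∧
    ((∑ i, |hR.eigenvalues i|) =
      Real.sqrt ((∑ i, rdeg2 G i ^ 2) / (∑ i, rdeg G i ^ 2)) +
        Real.sqrt (((n : ℝ) - 1) *
          ((∑ i, ∑ j, resistMatrix G i j ^ 2) -
            (∑ i, rdeg2 G i ^ 2) / (∑ i, rdeg G i ^ 2))) ↔
      G = ⊤) := by
  have h := resistance_energy_upper_bound_general hG hR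
  simp only [koolenMoulton, onesGrowth_sq] at h
  simpa only [onesGrowth, resistMatrix_mulVec_one, resistMatrix_mulVec_rdeg, Fintype.card_fin]
    using h
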